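/- Let Ω be a nonempty finite set, p a full-support probability vector on Ω, n ≥ 1, and for each ω ∈ Ω let v^ω : Δ(Ω)^n → ℝ be continuous. Say that a family of continuous functions u^ω : Δ(Ω)^n → ℝ (ω ∈ Ω) makes non-revealing optimal for any prior if, for every full-support probability vector q on Ω and every feasible collection (μ^ω)_{ω∈Ω} for prior q, one has ∑_{ω∈Ω} q(ω)·∫ u^ω dμ^ω ≤ ∑_{ω∈Ω} q(ω)·u^ω(q,…,q). Then the value Val of the persuasion problem with utilities (v^ω) and prior p equals the minimum, over all families of continuous functions u^ω with v^ω(x_1,…,x_n) ≤ u^ω(x_1,…,x_n) for all ω and all (x_1,…,x_n) and which make non-revealing optimal for any prior, of ∑_{ω∈Ω} p(ω)·u^ω(p,…,p); moreover the minimum is attained. -/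

import Mathlib

open MeasureTheory

noncomputable section

abbrev Belief (Ω : Type) [Fintype Ω] : Type := stdSimplex ℝ Ω

variable {Ω : Type} [Fintype Ω] [MeasurableSpace Ω] [MeasurableSingletonClass Ω]

/-- The joint distribution of state and beliefs. -/
def jointP (p : Ω → ℝ) {X : Type} [MeasurableSpace X] (μ : Ω → Measure X) :
    Measure (Ω × X) :=
  ∑ ω : Ω, ENNReal.ofReal (p ω) • ((Measure.dirac ω).prod (μ ω))

/-- Feasibility of a collection of conditional belief distributions, n receivers. -/
def Feasible (p : Ω → ℝ) (n : ℕ) (μ : Ω → Measure (Fin n → Belief Ω)) : Prop :=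
  (∀ ω, IsProbabilityMeasure (μ ω)) ∧
  ∀ (i : Fin n) (ω' : Ω),
    (fun z : Ω × (Fin n → Belief Ω) => (z.2 i).1 ω')
      =ᵐ[jointP p μ]
      (jointP p μ)[Set.indicator {z : Ω × (Fin n → Belief Ω) | z.1 = ω'} (fun _ => (1 : ℝ)) |
        MeasurableSpace.comap (fun z : Ω × (Fin n → Belief Ω) => z.2 i) inferInstance]

/-- Feasibility of a collection of conditional belief distributions, single receiver. -/
def Feasible1 (p : Ω → ℝ) (lam : Ω → Measure (Belief Ω)) : Prop :=
  (∀ ω, IsProbabilityMeasure (lam ω)) ∧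
  ∀ ω' : Ω,
    (fun z : Ω × Belief Ω => (z.2).1 ω')
      =ᵐ[jointP p lam]
      (jointP p lam)[Set.indicator {z : Ω × Belief Ω | z.1 = ω'} (fun _ => (1 : ℝ)) |
        MeasurableSpace.comap (fun z : Ω × Belief Ω => z.2) inferInstance]

/-- the value of the persuasion problem -/
def Val (p : Ω → ℝ) (n : ℕ) (v : Ω → (Fin n → Belief Ω) → ℝ) : ℝ :=
  sSup { r | ∃ μ : Ω → Measure (Fin n → Belief Ω),
    Feasible p n μ ∧ r = ∑ ω : Ω, p ω * ∫ x, v ω x ∂(μ ω) }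

end

/-! Feasibility of `μ` says exactly that every *balanced* transfer, i.e. every continuous family
`β ω` with `∑ ω, b ω * β ω b = 0` at each belief `b`, has expectation zero; the balanced transfers
are the Lagrange multipliers of persuasion. A utility `V ω + ∑ i, β i ω (x i)` with balanced
`β i` has the same expectation `∑ ω, q ω * V ω` under every feasible collection for every prior `q`,
including the non-revealing one, so it makes non-revealing optimal.

The cheapest such utility above `v` exists: replacing each transfer in turn by its `c`-transform
bounds its increments by those of `v`, which gives both compactness and continuity. There is no
duality gap: by Hahn–Banach some linear functional below the sublinear dual value agrees with it at
`v`, and by Riesz–Markov–Kakutani that functional is integration against a feasible collection. -/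

open Set BoundedContinuousFunction CompactlySupported

section Balanced

variable {Ω : Type} [Fintype Ω]

lemma continuous_belief_apply (ω : Ω) : Continuous fun b : Belief Ω => b ω :=
  (continuous_apply ω).comp continuous_subtype_val

lemma continuous_profile_apply {ι : Type*} (i : ι) (ω : Ω) :
    Continuous fun x : ι → Belief Ω => x i ω :=
  (continuous_belief_apply ω).comp (continuous_apply i)

/-- A family of state-dependent transfers to one receiver is balanced if it has zero expectation
at every belief. Balanced transfers are the Lagrange multipliers of the feasibility constraint. -/
def IsBalanced (β : Ω → Belief Ω → ℝ) : Prop :=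
  ∀ b : Belief Ω, ∑ ω, b ω * β ω b = 0

lemma sum_mul_add_sum_balanced_diag {ι : Type*} [Fintype ι] (q : Belief Ω) (V : Ω → ℝ)
    {β : ι → Ω → Belief Ω → ℝ} (hβ : ∀ i, IsBalanced (β i)) :
    ∑ ω, q ω * (V ω + ∑ i, β i ω q) = ∑ ω, q ω * V ω := by
  have hzero : ∑ ω, ∑ i, q ω * β i ω q = 0 := by
    rw [Finset.sum_comm]
    exact Finset.sum_eq_zero fun i _ => hβ i q
  simp only [mul_add, Finset.sum_add_distrib, Finset.mul_sum, hzero, add_zero]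

/-- The transfers `β` recentred at each belief by their expectation, which makes them balanced. -/
def recenter (β : Ω → Belief Ω → ℝ) (ω : Ω) (b : Belief Ω) : ℝ :=
  β ω b - ∑ ω', b ω' * β ω' b

variable {β : Ω → Belief Ω → ℝ}

lemma isBalanced_recenter (β : Ω → Belief Ω → ℝ) : IsBalanced (recenter β) := fun b => by
  simp only [recenter, mul_sub, Finset.sum_sub_distrib, ← Finset.sum_mul, stdSimplex.sum_eq_one,
    one_mul, sub_self]

lemma le_recenter {b : Belief Ω} (h : ∑ ω, b ω * β ω b ≤ 0) (ω : Ω) : β ω b ≤ recenter β ω b := by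
  rw [recenter]
  linarith

lemma continuous_recenter (hβ : ∀ ω, Continuous (β ω)) (ω : Ω) : Continuous (recenter β ω) :=
  (hβ ω).sub (continuous_finsetSum _ fun ω' _ => (continuous_belief_apply ω').mul (hβ ω'))

end Balanced

section ConditionalExpectation

variable {Z E : Type*} [MeasurableSpace Z] [MeasurableSpace E] [TopologicalSpace E]
  [HasOuterApproxClosed E] [BorelSpace E] {P : Measure Z} {Y : Z → E}

-- The positive and negative parts of `d` push forward under `Y` to the same finite measure.
lemma setIntegral_preimage_eq_zero_of_forall_integral_mul_eq_zero (hY : Measurable Y) {d : Z → ℝ}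
    (hd : Integrable d P) (h : ∀ f : E →ᵇ ℝ, ∫ z, f (Y z) * d z ∂P = 0) {B : Set E}
    (hB : MeasurableSet B) : ∫ z in Y ⁻¹' B, d z ∂P = 0 := by
  let ρ (e : Z → ℝ) : Measure E := (P.withDensity fun z => ENNReal.ofReal (e z)).map Y
  have hfin {e : Z → ℝ} (he : Integrable e P) : IsFiniteMeasure (ρ e) := by
    have := isFiniteMeasure_withDensity_ofReal he.2
    infer_instance
  have hint {e : Z → ℝ} (he : Integrable e P) (f : E →ᵇ ℝ) :
      ∫ y, f y ∂ρ e = ∫ z, f (Y z) * max (e z) 0 ∂P := by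
    rw [integral_map hY.aemeasurable f.continuous.aestronglyMeasurable,
      integral_withDensity_eq_integral_toReal_smul₀ he.aemeasurable.ennreal_ofReal
        (ae_of_all _ fun _ => ENNReal.ofReal_lt_top)]
    simp only [ENNReal.toReal_ofReal', smul_eq_mul, mul_comm]
  have hmul {e : Z → ℝ} (he : Integrable e P) (f : E →ᵇ ℝ) :
      Integrable (fun z => f (Y z) * max (e z) 0) P :=
    he.pos_part.bdd_mul (f.continuous.measurable.comp hY).aestronglyMeasurable
      (ae_of_all _ fun z => f.norm_coe_le_norm (Y z))
  have := hfin hd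
  have := hfin hd.neg
  have hρ : ρ d = ρ (-d) := by
    refine ext_of_forall_integral_eq_of_IsFiniteMeasure fun f => ?_
    rw [hint hd, hint hd.neg, ← sub_eq_zero, ← integral_sub (hmul hd f) (hmul hd.neg f)]
    refine (integral_congr_ae (ae_of_all _ fun z => ?_)).trans (h f)
    simp only [← mul_sub, Pi.neg_apply, max_zero_sub_max_neg_zero_eq_self]
  have happly (e : Z → ℝ) : ρ e B = ∫⁻ z in Y ⁻¹' B, ENNReal.ofReal (e z) ∂P := by
    rw [Measure.map_apply hY hB, withDensity_apply _ (hY hB)]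
  rw [integral_eq_lintegral_pos_part_sub_lintegral_neg_part hd.integrableOn, ← happly d,
    hρ, happly, sub_eq_zero]
  rfl

theorem ae_eq_condExp_comap_iff_forall_integral [IsFiniteMeasure P] (hY : Measurable Y)
    {g : E → ℝ} (hg : Measurable g) (hgY : Integrable (g ∘ Y) P) {h : Z → ℝ} (hh : Integrable h P) :
    g ∘ Y =ᵐ[P] P[h | MeasurableSpace.comap Y inferInstance] ↔
      ∀ f : E →ᵇ ℝ, ∫ z, f (Y z) * g (Y z) ∂P = ∫ z, f (Y z) * h z ∂P := by
  have hbound (f : E →ᵇ ℝ) : ∀ᵐ z ∂P, ‖f (Y z)‖ ≤ ‖f‖ :=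
    ae_of_all _ fun z => f.norm_coe_le_norm (Y z)
  constructor
  · intro hcond f
    have hpull := condExp_stronglyMeasurable_mul_of_bound hY.comap_le
      (f.continuous.measurable.comp (comap_measurable Y)).stronglyMeasurable hh ‖f‖ (hbound f)
    calc ∫ z, f (Y z) * g (Y z) ∂P
        = ∫ z, P[(f ∘ Y) * h | MeasurableSpace.comap Y inferInstance] z ∂P := by
          refine integral_congr_ae ?_
          filter_upwards [hcond, hpull] with z hz hz'
          rw [hz', Pi.mul_apply, ← hz, Function.comp_apply, Function.comp_apply]
      _ = ∫ z, f (Y z) * h z ∂P := integral_condExp hY.comap_le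
  · intro htest
    refine ae_eq_condExp_of_forall_setIntegral_eq hY.comap_le hh
      (fun s _ _ => hgY.integrableOn) ?_ (hg.comp (comap_measurable Y)).aestronglyMeasurable
    rintro _ ⟨B, hB, rfl⟩ -
    rw [← sub_eq_zero, ← integral_sub hgY.integrableOn hh.integrableOn]
    refine setIntegral_preimage_eq_zero_of_forall_integral_mul_eq_zero hY (hgY.sub hh)
      (fun f => ?_) hB
    have hf : AEStronglyMeasurable (f ∘ Y) P :=
      (f.continuous.measurable.comp hY).aestronglyMeasurable
    have hfg : Integrable (fun z => f (Y z) * g (Y z)) P := hgY.bdd_mul hf (hbound f)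
    have hfh : Integrable (fun z => f (Y z) * h z) P := hh.bdd_mul hf (hbound f)
    simp only [mul_sub, Pi.sub_apply, Function.comp_apply]
    rw [integral_sub hfg hfh, htest f, sub_self]

end ConditionalExpectation

section Feasibility

variable {Ω : Type} [MeasurableSpace Ω] [MeasurableSingletonClass Ω] [Fintype Ω]
  {X : Type} [MeasurableSpace X]

instance isFiniteMeasure_jointP (p : Ω → ℝ) (μ : Ω → Measure X) [∀ ω, IsFiniteMeasure (μ ω)] :
    IsFiniteMeasure (jointP p μ) := by
  have (ω : Ω) : IsFiniteMeasure (ENNReal.ofReal (p ω) • (Measure.dirac ω).prod (μ ω)) :=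
    Measure.smul_finite _ ENNReal.ofReal_ne_top
  unfold jointP
  infer_instance

lemma integral_jointP {p : Ω → ℝ} (hp : ∀ ω, 0 ≤ p ω) {μ : Ω → Measure X} [∀ ω, SFinite (μ ω)]
    {h : Ω × X → ℝ} (hh : Integrable h (jointP p μ)) :
    ∫ z, h z ∂jointP p μ = ∑ ω, p ω * ∫ x, h (ω, x) ∂μ ω := by
  unfold jointP at hh ⊢
  rw [integral_finsetSum_measure (integrable_finsetSum_measure.1 hh)]
  refine Finset.sum_congr rfl fun ω _ => ?_
  rw [integral_smul_measure, ENNReal.toReal_ofReal (hp ω), Measure.dirac_prod,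
    (measurableEmbedding_prodMk_left ω).integral_map, smul_eq_mul]

theorem feasible_iff_forall_integral {p : Ω → ℝ} (hp : ∀ ω, 0 ≤ p ω) {n : ℕ}
    {μ : Ω → Measure (Fin n → Belief Ω)} [∀ ω, IsProbabilityMeasure (μ ω)] :
    Feasible p n μ ↔ ∀ (i : Fin n) (ω' : Ω) (f : Belief Ω →ᵇ ℝ),
      ∑ ω, p ω * ∫ x, f (x i) * x i ω' ∂μ ω = p ω' * ∫ x, f (x i) ∂μ ω' := by
  refine (and_iff_right ‹_›).trans (forall₂_congr fun i ω' => ?_)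
  have hY : Measurable fun z : Ω × (Fin n → Belief Ω) => z.2 i :=
    (measurable_pi_apply i).comp measurable_snd
  have hg : Measurable fun b : Belief Ω => b ω' := (continuous_belief_apply ω').measurable
  have hind : MeasurableSet {z : Ω × (Fin n → Belief Ω) | z.1 = ω'} :=
    measurable_fst (measurableSet_singleton ω')
  have hgY : Integrable ((fun b : Belief Ω => b ω') ∘ fun z => z.2 i) (jointP p μ) :=
    .of_bound (hg.comp hY).aestronglyMeasurable 1 <| ae_of_all _ fun z => by
      simpa using abs_le.2 ⟨by linarith [stdSimplex.zero_le (z.2 i) ω'], stdSimplex.le_one _ _⟩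
  have hh : Integrable ({z : Ω × (Fin n → Belief Ω) | z.1 = ω'}.indicator fun _ => (1 : ℝ))
      (jointP p μ) := (integrable_const 1).indicator hind
  refine (ae_eq_condExp_comap_iff_forall_integral hY hg hgY hh).trans (forall_congr' fun f => ?_)
  have hf : AEStronglyMeasurable (fun z : Ω × (Fin n → Belief Ω) => f (z.2 i)) (jointP p μ) :=
    (f.continuous.measurable.comp hY).aestronglyMeasurable
  have hbound : ∀ᵐ z ∂jointP p μ, ‖f (z.2 i)‖ ≤ ‖f‖ :=
    ae_of_all _ fun z => f.norm_coe_le_norm (z.2 i)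
  have hfg : Integrable (fun z => f (z.2 i) * z.2 i ω') (jointP p μ) := hgY.bdd_mul hf hbound
  have hfh : Integrable (fun z => f (z.2 i) * {z : Ω × (Fin n → Belief Ω) | z.1 = ω'}.indicator
      (fun _ => (1 : ℝ)) z) (jointP p μ) := hh.bdd_mul hf hbound
  have hstate : ∑ ω, p ω * ∫ x, f (x i) * {z : Ω × (Fin n → Belief Ω) | z.1 = ω'}.indicator
      (fun _ => (1 : ℝ)) (ω, x) ∂μ ω = p ω' * ∫ x, f (x i) ∂μ ω' := by
    rw [Finset.sum_eq_single_of_mem ω' (Finset.mem_univ ω') fun ω _ hω => by simp [hω]]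
    simp
  rw [integral_jointP hp hfg, integral_jointP hp hfh, hstate]

theorem Feasible.sum_integral_balanced_eq_zero {p : Ω → ℝ} (hp : ∀ ω, 0 ≤ p ω) {n : ℕ}
    {μ : Ω → Measure (Fin n → Belief Ω)} (hμ : Feasible p n μ) (i : Fin n)
    {β : Ω → C(Belief Ω, ℝ)} (hβ : IsBalanced fun ω => β ω) :
    ∑ ω, p ω * ∫ x, β ω (x i) ∂μ ω = 0 := by
  have := hμ.1
  have hβi (ω : Ω) : Continuous fun x : Fin n → Belief Ω => β ω (x i) := by fun_prop
  have hint (ω ω' : Ω) : Integrable (fun x => x i ω * β ω (x i)) (μ ω') :=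
    ((continuous_profile_apply i ω).mul (hβi ω)).integrable_of_hasCompactSupport
      (.of_compactSpace _)
  calc ∑ ω, p ω * ∫ x, β ω (x i) ∂μ ω
      = ∑ ω, ∑ ω', p ω' * ∫ x, β ω (x i) * x i ω ∂μ ω' :=
        Finset.sum_congr rfl fun ω _ =>
          ((feasible_iff_forall_integral hp).1 hμ i ω (.mkOfCompact (β ω))).symm
    _ = ∑ ω', p ω' * ∫ x, ∑ ω, x i ω * β ω (x i) ∂μ ω' := by
        rw [Finset.sum_comm]
        refine Finset.sum_congr rfl fun ω' _ => ?_
        rw [integral_finsetSum _ fun ω _ => hint ω ω', Finset.mul_sum]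
        simp only [mul_comm]
    _ = 0 := by simp [hβ _]

-- Test with the recentred transfer that pays `f` in state `ω'` and nothing in the others.
theorem feasible_of_forall_balanced {p : Ω → ℝ} (hp : ∀ ω, 0 ≤ p ω) {n : ℕ}
    {μ : Ω → Measure (Fin n → Belief Ω)} [∀ ω, IsProbabilityMeasure (μ ω)]
    (h : ∀ (i : Fin n) (β : Ω → C(Belief Ω, ℝ)), IsBalanced (fun ω => β ω) →
      ∑ ω, p ω * ∫ x, β ω (x i) ∂μ ω = 0) :
    Feasible p n μ := by
  classical
  refine (feasible_iff_forall_integral hp).2 fun i ω' f => ?_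
  let α (ω : Ω) (b : Belief Ω) : ℝ := if ω = ω' then f b else 0
  have hα (ω : Ω) : Continuous (α ω) := by
    unfold α
    split_ifs <;> fun_prop
  have hrecenter (ω : Ω) (b : Belief Ω) : recenter α ω b = α ω b - f b * b ω' := by
    simp [recenter, α, mul_comm]
  have hint (ω : Ω) : ∫ x, recenter α ω (x i) ∂μ ω =
      (if ω = ω' then ∫ x, f (x i) ∂μ ω else 0) - ∫ x, f (x i) * x i ω' ∂μ ω := by
    have hfi : Continuous fun x : Fin n → Belief Ω => f (x i) := by fun_prop
    have hαx : Integrable (fun x => α ω (x i)) (μ ω) :=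
      ((hα ω).comp (continuous_apply i)).integrable_of_hasCompactSupport (.of_compactSpace _)
    have hfx : Integrable (fun x => f (x i) * x i ω') (μ ω) :=
      (hfi.mul (continuous_profile_apply i ω')).integrable_of_hasCompactSupport
        (.of_compactSpace _)
    simp only [hrecenter]
    rw [integral_sub hαx hfx]
    split_ifs with hω <;> simp [α, hω]
  have hsum := h i (fun ω => ⟨recenter α ω, continuous_recenter hα ω⟩) (isBalanced_recenter α)
  simp only [ContinuousMap.coe_mk, hint, mul_sub, mul_ite, mul_zero, Finset.sum_sub_distrib,
    Finset.sum_ite_eq', Finset.mem_univ, if_true] at hsum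
  exact (sub_eq_zero.1 hsum).symm

end Feasibility

section SeparableMajorant

open Function

variable {ι : Type*} [DecidableEq ι] {X : ι → Type*} {f : (∀ i, X i) → ℝ}

/-- No increment of `φ` on the `i`-th factor exceeds the largest corresponding increment of `f`.
This closed condition supplies the uniform bounds and the equicontinuity that make potentials
dominating `f` compact. -/
def IncrementsDominated (f : (∀ i, X i) → ℝ) (i : ι) (φ : X i → ℝ) : Prop :=
  ∀ a b c, (∀ x, f (update x i a) - f (update x i b) ≤ c) → φ a - φ b ≤ c

lemma incrementsDominated_sub_const {i : ι} {φ : X i → ℝ} {c : ℝ} :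
    IncrementsDominated (fun x => f x - c) i φ ↔ IncrementsDominated f i φ := by
  simp only [IncrementsDominated, sub_sub_sub_cancel_right]

lemma isClosed_setOf_incrementsDominated (i : ι) :
    IsClosed {φ : X i → ℝ | IncrementsDominated f i φ} := by
  simp only [IncrementsDominated, ofPred_forall]
  exact isClosed_iInter fun a => isClosed_iInter fun b => isClosed_iInter fun c =>
    isClosed_iInter fun _ => isClosed_le (by fun_prop) continuous_const

lemma IncrementsDominated.uniformContinuous [Finite ι] [∀ i, PseudoMetricSpace (X i)]
    (hf : UniformContinuous f) {i : ι} {φ : X i → ℝ} (hφ : IncrementsDominated f i φ) :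
    UniformContinuous φ := by
  have := Fintype.ofFinite ι
  refine Metric.uniformContinuous_iff.2 fun ε hε => ?_
  obtain ⟨δ, hδ, hfδ⟩ := Metric.uniformContinuous_iff.1 hf (ε / 2) (half_pos hε)
  have hincr {a b : X i} (hab : dist a b < δ) : φ a - φ b ≤ ε / 2 := by
    refine hφ a b _ fun x => (le_abs_self _).trans (hfδ ?_).le
    refine (dist_pi_lt_iff hδ).2 fun j => ?_
    rcases eq_or_ne j i with rfl | hj
    · simpa using hab
    · simpa [hj] using hδ
  refine ⟨δ, hδ, fun a b hab => (abs_sub_le_iff.2 ⟨hincr hab, hincr ?_⟩).trans_lt (half_lt_self hε)⟩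
  rwa [dist_comm]

variable [Fintype ι]

/-- The multi-marginal `c`-transform: the least `i`-th potential that, together with the remaining
potentials of `φ`, still dominates `f`. -/
noncomputable def cTransform (f : (∀ i, X i) → ℝ) (φ : ∀ i, X i → ℝ) (i : ι) (a : X i) : ℝ :=
  ⨆ x, f (update x i a) - ∑ j ∈ Finset.univ.erase i, φ j (x j)

variable {φ : ∀ i, X i → ℝ}

lemma sub_sum_erase_le_of_le_sum (h : ∀ x, f x ≤ ∑ i, φ i (x i)) (i : ι) (a : X i) (x : ∀ i, X i) :
    f (update x i a) - ∑ j ∈ Finset.univ.erase i, φ j (x j) ≤ φ i a := by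
  have hx := h (update x i a)
  rw [← Finset.add_sum_erase _ _ (Finset.mem_univ i), update_self] at hx
  rw [sub_le_iff_le_add]
  convert hx using 3 with j hj
  rw [update_of_ne (Finset.ne_of_mem_erase hj)]

lemma bddAbove_range_sub_sum_erase (h : ∀ x, f x ≤ ∑ i, φ i (x i)) (i : ι) (a : X i) :
    BddAbove (range fun x => f (update x i a) - ∑ j ∈ Finset.univ.erase i, φ j (x j)) :=
  ⟨φ i a, forall_mem_range.2 (sub_sum_erase_le_of_le_sum h i a)⟩

lemma le_cTransform_add_sum (h : ∀ x, f x ≤ ∑ i, φ i (x i)) (i : ι) (x : ∀ i, X i) :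
    f x ≤ cTransform f φ i (x i) + ∑ j ∈ Finset.univ.erase i, φ j (x j) := by
  rw [← sub_le_iff_le_add, cTransform]
  simpa only [update_eq_self] using le_ciSup (bddAbove_range_sub_sum_erase h i (x i)) x

variable [∀ i, Nonempty (X i)]

lemma cTransform_le (h : ∀ x, f x ≤ ∑ i, φ i (x i)) (i : ι) : cTransform f φ i ≤ φ i :=
  fun a => ciSup_le (sub_sum_erase_le_of_le_sum h i a)

lemma incrementsDominated_cTransform (h : ∀ x, f x ≤ ∑ i, φ i (x i)) (i : ι) :
    IncrementsDominated f i (cTransform f φ i) := by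
  intro a b c hc
  refine sub_le_iff_le_add.2 (ciSup_le fun x => ?_)
  calc f (update x i a) - ∑ j ∈ Finset.univ.erase i, φ j (x j)
      ≤ c + (f (update x i b) - ∑ j ∈ Finset.univ.erase i, φ j (x j)) := by linarith [hc x]
    _ ≤ c + cTransform f φ i b := by
      gcongr
      exact le_ciSup (bddAbove_range_sub_sum_erase h i b) x

theorem exists_le_incrementsDominated (h : ∀ x, f x ≤ ∑ i, φ i (x i)) :
    ∃ ψ ≤ φ, (∀ x, f x ≤ ∑ i, ψ i (x i)) ∧ ∀ i, IncrementsDominated f i (ψ i) := by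
  suffices key : ∀ s : Finset ι, ∃ ψ ≤ φ, (∀ x, f x ≤ ∑ i, ψ i (x i)) ∧
      ∀ i ∈ s, IncrementsDominated f i (ψ i) by
    simpa using key Finset.univ
  intro s
  induction s using Finset.induction_on with
  | empty => exact ⟨φ, le_rfl, h, by simp⟩
  | insert i s _ ih =>
    obtain ⟨ψ, hψφ, hψ, hs⟩ := ih
    refine ⟨update ψ i (cTransform f ψ i),
      (update_le_self_iff.2 (cTransform_le hψ i)).trans hψφ, fun x => ?_, fun j hj => ?_⟩
    · rw [← Finset.add_sum_erase _ _ (Finset.mem_univ i), update_self]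
      convert le_cTransform_add_sum hψ i x using 3 with j hj
      rw [update_of_ne (Finset.ne_of_mem_erase hj)]
    · rcases eq_or_ne j i with rfl | hji
      · rw [update_self]
        exact incrementsDominated_cTransform hψ j
      · rw [update_of_ne hji]
        exact hs j (Finset.mem_of_mem_insert_of_ne hj hji)

end SeparableMajorant

lemma abs_apply_le_norm {Ω X : Type*} [Fintype Ω] [TopologicalSpace X] [CompactSpace X]
    (w : Ω → C(X, ℝ)) (ω : Ω) (x : X) : |w ω x| ≤ ‖w‖ :=
  ((w ω).norm_coe_le_norm x).trans (norm_le_pi_norm w ω)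

section DualProblem

variable {Ω : Type} [Fintype Ω] {ι : Type*} [Fintype ι]

/-- Feasibility in the Lagrangian dual of the persuasion problem: `V ω` is the price of state `ω`,
and `β i` are state-dependent transfers to receiver `i` with nonpositive expectation at every
belief. Allowing negative expectations, rather than asking for balanced transfers, lets one decrease
`β` to regularise it. -/
structure IsDualFeasible (w : Ω → (ι → Belief Ω) → ℝ) (V : Ω → ℝ)
    (β : ι → Ω → Belief Ω → ℝ) : Prop where
  le_add_sum : ∀ ω x, w ω x ≤ V ω + ∑ i, β i ω (x i)
  sum_mul_nonpos : ∀ i (b : Belief Ω), ∑ ω, b ω * β i ω b ≤ 0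

namespace IsDualFeasible

variable {w w' : Ω → (ι → Belief Ω) → ℝ} {V V' : Ω → ℝ} {β β' : ι → Ω → Belief Ω → ℝ}

lemma add (h : IsDualFeasible w V β) (h' : IsDualFeasible w' V' β') :
    IsDualFeasible (w + w') (V + V') (β + β') where
  le_add_sum ω x := by
    have := add_le_add (h.le_add_sum ω x) (h'.le_add_sum ω x)
    simpa only [Pi.add_apply, Finset.sum_add_distrib, add_add_add_comm] using this
  sum_mul_nonpos i b := by
    simpa only [Pi.add_apply, mul_add, Finset.sum_add_distrib] using
      add_nonpos (h.sum_mul_nonpos i b) (h'.sum_mul_nonpos i b)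

lemma smul {c : ℝ} (hc : 0 ≤ c) (h : IsDualFeasible w V β) :
    IsDualFeasible (c • w) (c • V) (c • β) where
  le_add_sum ω x := by
    simpa only [Pi.smul_apply, smul_eq_mul, mul_add, Finset.mul_sum] using
      mul_le_mul_of_nonneg_left (h.le_add_sum ω x) hc
  sum_mul_nonpos i b := by
    simpa only [Pi.smul_apply, smul_eq_mul, mul_left_comm _ c, ← Finset.mul_sum] using
      mul_nonpos_of_nonneg_of_nonpos hc (h.sum_mul_nonpos i b)

lemma apply_vertex_nonpos [DecidableEq Ω] (h : IsDualFeasible w V β) (i : ι) (ω : Ω) :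
    β i ω (stdSimplex.vertex ω) ≤ 0 := by
  simpa [stdSimplex.vertex_coe, Pi.single_apply] using h.sum_mul_nonpos i (stdSimplex.vertex ω)

lemma exists_incrementsDominated [DecidableEq ι] (h : IsDualFeasible w V β) :
    ∃ ψ, IsDualFeasible w V ψ ∧ ∀ i ω, IncrementsDominated (w ω) i (ψ i ω) := by
  classical
  have hmaj (ω : Ω) (x : ι → Belief Ω) : w ω x - V ω ≤ ∑ i, β i ω (x i) :=
    sub_le_iff_le_add'.2 (h.le_add_sum ω x)
  have hreg (ω : Ω) :=
    have : Nonempty (Belief Ω) := ⟨stdSimplex.vertex ω⟩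
    exists_le_incrementsDominated (hmaj ω)
  choose ψ hψβ hψ hψi using hreg
  refine ⟨fun i ω => ψ ω i, ⟨fun ω x => sub_le_iff_le_add'.1 (hψ ω x), fun i b => ?_⟩,
    fun i ω => incrementsDominated_sub_const.1 (hψi ω i)⟩
  refine (Finset.sum_le_sum fun ω _ => ?_).trans (h.sum_mul_nonpos i b)
  exact mul_le_mul_of_nonneg_left (hψβ ω i b) (stdSimplex.zero_le b ω)

variable {w : Ω → C(ι → Belief Ω, ℝ)}

lemma neg_norm_le (h : IsDualFeasible (fun ω => w ω) V β) (ω : Ω) : -‖w‖ ≤ V ω := by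
  classical
  have hsum : ∑ i, β i ω (stdSimplex.vertex ω) ≤ 0 :=
    Finset.sum_nonpos fun i _ => h.apply_vertex_nonpos i ω
  linarith [h.le_add_sum ω fun _ => stdSimplex.vertex ω,
    (abs_le.1 (abs_apply_le_norm w ω fun _ => stdSimplex.vertex ω)).1]

lemma le_two_mul_norm_div (h : IsDualFeasible (fun ω => w ω) V β) {p : Belief Ω} {ω : Ω}
    (hp : 0 < p ω) (hV : ∑ ω, p ω * V ω ≤ ‖w‖) : V ω ≤ 2 * ‖w‖ / p ω := by
  have hsum : p ω * (V ω + ‖w‖) ≤ ∑ ω', p ω' * (V ω' + ‖w‖) :=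
    Finset.single_le_sum (f := fun ω' => p ω' * (V ω' + ‖w‖)) (fun ω' _ =>
      mul_nonneg (stdSimplex.zero_le p ω') (by linarith [h.neg_norm_le ω'])) (Finset.mem_univ ω)
  simp only [mul_add, Finset.sum_add_distrib, ← Finset.sum_mul, stdSimplex.sum_eq_one,
    one_mul] at hsum
  rw [le_div_iff₀ hp, mul_comm]
  linarith [mul_nonneg hp.le (norm_nonneg w)]

lemma apply_le_two_mul_norm [DecidableEq ι] (h : IsDualFeasible (fun ω => w ω) V β) {i : ι} {ω : Ω}
    (hβ : IncrementsDominated (w ω) i (β i ω)) (b : Belief Ω) : β i ω b ≤ 2 * ‖w‖ := by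
  classical
  have hincr := hβ b (stdSimplex.vertex ω) (2 * ‖w‖) fun x => by
    linarith [(abs_le.1 (abs_apply_le_norm w ω (Function.update x i b))).2,
      (abs_le.1 (abs_apply_le_norm w ω (Function.update x i (stdSimplex.vertex ω)))).1]
  linarith [h.apply_vertex_nonpos i ω]

lemma neg_norm_sub_le_apply (h : IsDualFeasible (fun ω => w ω) V β) (i : ι) (ω : Ω)
    (b : Belief Ω) : -‖w‖ - V ω ≤ β i ω b := by
  classical
  let x : ι → Belief Ω := Function.update (fun _ => stdSimplex.vertex ω) i b
  have hsum : ∑ j, β j ω (x j) ≤ β i ω b := by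
    rw [← Finset.add_sum_erase _ _ (Finset.mem_univ i), show x i = b from Function.update_self ..]
    refine add_le_of_nonpos_right (Finset.sum_nonpos fun j hj => ?_)
    simpa [x, Finset.ne_of_mem_erase hj] using h.apply_vertex_nonpos j ω
  linarith [h.le_add_sum ω x, (abs_le.1 (abs_apply_le_norm w ω x)).1]

end IsDualFeasible

lemma isDualFeasible_norm (w : Ω → C(ι → Belief Ω, ℝ)) :
    IsDualFeasible (fun ω => w ω) (fun _ => ‖w‖) 0 where
  le_add_sum ω x := by simpa using (abs_le.1 (abs_apply_le_norm w ω x)).2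
  sum_mul_nonpos i b := by simp

lemma isClosed_setOf_isDualFeasible (w : Ω → (ι → Belief Ω) → ℝ) :
    IsClosed {d : (Ω → ℝ) × (ι → Ω → Belief Ω → ℝ) | IsDualFeasible w d.1 d.2} := by
  have heq : {d : (Ω → ℝ) × (ι → Ω → Belief Ω → ℝ) | IsDualFeasible w d.1 d.2} =
      {d | (∀ ω x, w ω x ≤ d.1 ω + ∑ i, d.2 i ω (x i)) ∧
        ∀ i (b : Belief Ω), ∑ ω, b ω * d.2 i ω b ≤ 0} :=
    Set.ext fun d => ⟨fun h => ⟨h.1, h.2⟩, fun h => ⟨h.1, h.2⟩⟩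
  simp only [heq, ofPred_and, ofPred_forall]
  exact (isClosed_iInter fun ω => isClosed_iInter fun x =>
    isClosed_le continuous_const (by fun_prop)).inter
    (isClosed_iInter fun i => isClosed_iInter fun b => isClosed_le (by fun_prop) continuous_const)

-- Tychonoff: the transfers range over a product of compact intervals indexed by the beliefs.
lemma isCompact_setOf_isDualFeasible_incrementsDominated [DecidableEq ι] {p : Belief Ω}
    (hp : ∀ ω, 0 < p ω) (w : Ω → C(ι → Belief Ω, ℝ)) :
    IsCompact {d : (Ω → ℝ) × (ι → Ω → Belief Ω → ℝ) | IsDualFeasible (fun ω => w ω) d.1 d.2 ∧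
      (∀ i ω, IncrementsDominated (w ω) i (d.2 i ω)) ∧ ∑ ω, p ω * d.1 ω ≤ ‖w‖} := by
  refine (isCompact_Icc (a := (fun _ => -‖w‖, fun _ ω _ => -‖w‖ - 2 * ‖w‖ / p ω))
    (b := (fun ω => 2 * ‖w‖ / p ω, fun _ _ _ => 2 * ‖w‖))).of_isClosed_subset ?_ ?_
  · have hincr (i : ι) (ω : Ω) : IsClosed {d : (Ω → ℝ) × (ι → Ω → Belief Ω → ℝ) |
        IncrementsDominated (w ω) i (d.2 i ω)} :=
      (isClosed_setOf_incrementsDominated (f := w ω) i).preimage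
        (f := fun d : (Ω → ℝ) × (ι → Ω → Belief Ω → ℝ) => d.2 i ω) (by fun_prop)
    simp only [ofPred_and, ofPred_forall]
    exact (isClosed_setOf_isDualFeasible _).inter
      ((isClosed_iInter fun i => isClosed_iInter fun ω => hincr i ω).inter
        (isClosed_le (by fun_prop) continuous_const))
  · rintro ⟨V, β⟩ ⟨h, hβ, hV⟩
    exact ⟨⟨h.neg_norm_le, fun i ω b => by
        linarith [h.neg_norm_sub_le_apply i ω b, h.le_two_mul_norm_div (hp ω) hV]⟩,
      fun ω => h.le_two_mul_norm_div (hp ω) hV, fun i ω b => h.apply_le_two_mul_norm (hβ i ω) b⟩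

theorem exists_isDualFeasible_forall_le {p : Belief Ω} (hp : ∀ ω, 0 < p ω)
    (w : Ω → C(ι → Belief Ω, ℝ)) :
    ∃ V β, IsDualFeasible (fun ω => w ω) V β ∧ (∀ i ω, Continuous (β i ω)) ∧
      ∀ V' β', IsDualFeasible (fun ω => w ω) V' β' → ∑ ω, p ω * V ω ≤ ∑ ω, p ω * V' ω := by
  classical
  obtain ⟨β₀, h₀, hβ₀⟩ := (isDualFeasible_norm w).exists_incrementsDominated
  obtain ⟨⟨V, β⟩, ⟨h, hβ, hV⟩, hmin⟩ :=
    (isCompact_setOf_isDualFeasible_incrementsDominated hp w).exists_isMinOn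
      (f := fun d => ∑ ω, p ω * d.1 ω)
      ⟨(fun _ => ‖w‖, β₀), h₀, hβ₀, by simp [← Finset.sum_mul]⟩
      (by fun_prop)
  refine ⟨V, β, h, fun i ω => ((hβ i ω).uniformContinuous
    (CompactSpace.uniformContinuous_of_continuous (w ω).continuous)).continuous,
    fun V' β' h' => ?_⟩
  rcases le_total (∑ ω, p ω * V' ω) ‖w‖ with hV' | hV'
  · obtain ⟨ψ, hψ, hψi⟩ := h'.exists_incrementsDominated
    exact isMinOn_iff.1 hmin (V', ψ) ⟨hψ, hψi, hV'⟩
  · exact hV.trans hV'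

/-- The value of the Lagrangian dual of the persuasion problem. -/
noncomputable def dualVal (p : Belief Ω) (w : Ω → C(ι → Belief Ω, ℝ)) : ℝ :=
  sInf {r | ∃ V β, IsDualFeasible (fun ω => w ω) V β ∧ ∑ ω, p ω * V ω = r}

lemma dualVal_le (p : Belief Ω) {w : Ω → C(ι → Belief Ω, ℝ)} {V : Ω → ℝ}
    {β : ι → Ω → Belief Ω → ℝ} (h : IsDualFeasible (fun ω => w ω) V β) :
    dualVal p w ≤ ∑ ω, p ω * V ω := by
  refine csInf_le ⟨∑ ω, p ω * -‖w‖, ?_⟩ ⟨V, β, h, rfl⟩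
  rintro _ ⟨V', β', h', rfl⟩
  exact Finset.sum_le_sum fun ω _ =>
    mul_le_mul_of_nonneg_left (h'.neg_norm_le ω) (stdSimplex.zero_le p ω)

lemma dualVal_const_le (p : Belief Ω) (c : Ω → ℝ) :
    dualVal p (fun ω => .const (ι → Belief Ω) (c ω)) ≤ ∑ ω, p ω * c ω :=
  dualVal_le p (β := 0) ⟨fun ω x => by simp, fun i b => by simp⟩

lemma dualVal_nonpos (p : Belief Ω) {w : Ω → C(ι → Belief Ω, ℝ)} (hw : w ≤ 0) :
    dualVal p w ≤ 0 :=
  (dualVal_le p (V := 0) (β := 0)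
    ⟨fun ω x => by simpa using hw ω x, fun i b => by simp⟩).trans_eq (by simp)

lemma IsBalanced.dualVal_comp_eval_nonpos (p : Belief Ω) (i : ι) {β : Ω → C(Belief Ω, ℝ)}
    (hβ : IsBalanced fun ω => β ω) : dualVal p (fun ω => (β ω).comp (.eval i)) ≤ 0 := by
  classical
  refine (dualVal_le p (V := 0) (β := Pi.single i fun ω => β ω)
    ⟨fun ω x => ?_, fun j b => ?_⟩).trans_eq (by simp)
  · rw [Finset.sum_eq_single_of_mem i (Finset.mem_univ i) fun j _ hj => by simp [hj]]
    simp
  · rcases eq_or_ne j i with rfl | hj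
    · simpa using (hβ b).le
    · simp [hj]

variable {p : Belief Ω} (hp : ∀ ω, 0 < p ω)
include hp

lemma exists_isDualFeasible_eq_dualVal (w : Ω → C(ι → Belief Ω, ℝ)) :
    ∃ V β, IsDualFeasible (fun ω => w ω) V β ∧ (∀ i ω, Continuous (β i ω)) ∧
      ∑ ω, p ω * V ω = dualVal p w := by
  obtain ⟨V, β, h, hβ, hmin⟩ := exists_isDualFeasible_forall_le hp w
  refine ⟨V, β, h, hβ, le_antisymm (le_csInf ⟨_, V, β, h, rfl⟩ ?_) (dualVal_le p h)⟩
  rintro _ ⟨V', β', h', rfl⟩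
  exact hmin V' β' h'

lemma dualVal_add_le (w w' : Ω → C(ι → Belief Ω, ℝ)) :
    dualVal p (w + w') ≤ dualVal p w + dualVal p w' := by
  obtain ⟨V, β, h, -, hV⟩ := exists_isDualFeasible_eq_dualVal hp w
  obtain ⟨V', β', h', -, hV'⟩ := exists_isDualFeasible_eq_dualVal hp w'
  refine (dualVal_le p (h.add h')).trans_eq ?_
  simp only [Pi.add_apply, mul_add, Finset.sum_add_distrib, hV, hV']

lemma dualVal_smul_le {c : ℝ} (hc : 0 ≤ c) (w : Ω → C(ι → Belief Ω, ℝ)) :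
    dualVal p (c • w) ≤ c * dualVal p w := by
  obtain ⟨V, β, h, -, hV⟩ := exists_isDualFeasible_eq_dualVal hp w
  refine (dualVal_le p (h.smul hc)).trans_eq ?_
  simp only [Pi.smul_apply, smul_eq_mul, mul_left_comm _ c, ← Finset.mul_sum, hV]

lemma dualVal_smul {c : ℝ} (hc : 0 < c) (w : Ω → C(ι → Belief Ω, ℝ)) :
    dualVal p (c • w) = c * dualVal p w := by
  refine (dualVal_smul_le hp hc.le w).antisymm ?_
  rw [← le_inv_mul_iff₀ hc]
  simpa [smul_smul, hc.ne'] using dualVal_smul_le hp (inv_nonneg.2 hc.le) (c • w)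

lemma exists_isBalanced_eq_dualVal (w : Ω → C(ι → Belief Ω, ℝ)) :
    ∃ (V : Ω → ℝ) (β : ι → Ω → C(Belief Ω, ℝ)), (∀ i, IsBalanced fun ω => β i ω) ∧
      (∀ ω x, w ω x ≤ V ω + ∑ i, β i ω (x i)) ∧ ∑ ω, p ω * V ω = dualVal p w := by
  obtain ⟨V, β, h, hβ, hV⟩ := exists_isDualFeasible_eq_dualVal hp w
  refine ⟨V, fun i ω => ⟨recenter (β i) ω, continuous_recenter (hβ i) ω⟩,
    fun i => isBalanced_recenter (β i), fun ω x => (h.le_add_sum ω x).trans ?_, hV⟩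
  gcongr with i
  exact le_recenter (h.sum_mul_nonpos i (x i)) ω

end DualProblem

section LinearFunctionals

lemma exists_linearMap_le_sublinear_apply_eq {E : Type*} [AddCommGroup E] [Module ℝ E] {N : E → ℝ}
    (hsmul : ∀ c : ℝ, 0 < c → ∀ x, N (c • x) = c * N x) (hadd : ∀ x y, N (x + y) ≤ N x + N y)
    (x₀ : E) : ∃ g : E →ₗ[ℝ] ℝ, g x₀ = N x₀ ∧ ∀ x, g x ≤ N x := by
  have hzero : N 0 = 0 := by
    have := hsmul 2 two_pos 0
    rw [smul_zero] at this
    linarith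
  have hneg (c : ℝ) (hc : c < 0) : c * N x₀ ≤ N (c • x₀) := by
    have := hadd (c • x₀) (-c • x₀)
    rw [← add_smul, add_neg_cancel, zero_smul, hzero, hsmul (-c) (neg_pos.2 hc)] at this
    linarith
  let f := LinearPMap.mkSpanSingleton' (σ := RingHom.id ℝ) x₀ (N x₀) fun c hc => by
    rcases smul_eq_zero.1 hc with rfl | rfl <;> simp [hzero]
  have hf (x : f.domain) : f x ≤ N x := by
    obtain ⟨x, hx⟩ := x
    obtain ⟨c, rfl⟩ := Submodule.mem_span_singleton.1 hx
    rw [LinearPMap.mkSpanSingleton'_apply, RingHom.id_apply, smul_eq_mul]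
    rcases lt_trichotomy c 0 with hc | rfl | hc
    · exact hneg c hc
    · simp [hzero]
    · exact (hsmul c hc x₀).ge
  obtain ⟨g, hgf, hgN⟩ := exists_extension_of_le_sublinear f N hsmul hadd hf
  exact ⟨g, (hgf ⟨x₀, Submodule.mem_span_singleton_self x₀⟩).trans
    (LinearPMap.mkSpanSingleton'_apply_self _ _ _ _), hgN⟩

variable {X : Type*} [TopologicalSpace X] [CompactSpace X] [T2Space X] [MeasurableSpace X]
  [BorelSpace X]

lemma exists_isFiniteMeasure_integral_eq (L : C(X, ℝ) →ₗ[ℝ] ℝ) (hL : ∀ f, 0 ≤ f → 0 ≤ L f) :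
    ∃ ν : Measure X, IsFiniteMeasure ν ∧ ∀ f : C(X, ℝ), ∫ x, f x ∂ν = L f := by
  let L' : C_c(X, ℝ) →ₗ[ℝ] ℝ :=
    { toFun f := L f.toContinuousMap
      map_add' f g := L.map_add f.toContinuousMap g.toContinuousMap
      map_smul' c f := L.map_smul c f.toContinuousMap }
  let Λ : C_c(X, ℝ) →ₚ[ℝ] ℝ := .mk₀ L' fun f hf => hL f.toContinuousMap hf
  exact ⟨RealRMK.rieszMeasure Λ, inferInstance, fun f =>
    RealRMK.integral_rieszMeasure Λ (CompactlySupportedContinuousMap.continuousMapEquiv f)⟩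

lemma exists_isFiniteMeasure_sum_integral_eq {Ω : Type*} [Fintype Ω]
    (g : (Ω → C(X, ℝ)) →ₗ[ℝ] ℝ) (hg : ∀ w, 0 ≤ w → 0 ≤ g w) :
    ∃ ν : Ω → Measure X, (∀ ω, IsFiniteMeasure (ν ω)) ∧
      ∀ w : Ω → C(X, ℝ), g w = ∑ ω, ∫ x, w ω x ∂ν ω := by
  classical
  choose ν hfin hν using fun ω => exists_isFiniteMeasure_integral_eq
    (g ∘ₗ LinearMap.single ℝ (fun _ => C(X, ℝ)) ω) fun f hf => hg _ (Pi.single_nonneg.2 hf)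
  refine ⟨ν, hfin, fun w => ?_⟩
  simp only [hν, LinearMap.comp_apply, LinearMap.coe_single, ← map_sum, Finset.univ_sum_single]

lemma exists_isProbabilityMeasure_mul_integral_eq {Z : Type*} [MeasurableSpace Z] {ν : Measure Z}
    {c : ℝ} (hc : 0 < c) (hν : ν.real univ = c) : ∃ μ : Measure Z, IsProbabilityMeasure μ ∧
      ∀ f : Z → ℝ, c * ∫ x, f x ∂μ = ∫ x, f x ∂ν := by
  have hne : ν ≠ 0 := by
    rintro rfl
    simp [hc.ne] at hν
  have hfin : IsFiniteMeasure ν :=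
    ⟨lt_top_iff_ne_top.2 fun h => by simp [measureReal_def, h, hc.ne] at hν⟩
  have := NeZero.mk hne
  refine ⟨(ν univ)⁻¹ • ν, inferInstance, fun f => ?_⟩
  rw [integral_smul_measure, ENNReal.toReal_inv, ← measureReal_def, hν, smul_eq_mul,
    mul_inv_cancel_left₀ hc.ne']

lemma sum_mul_integral_mono {Ω X : Type*} [Fintype Ω] [TopologicalSpace X] [CompactSpace X]
    [MeasurableSpace X] [OpensMeasurableSpace X] {μ : Ω → Measure X} [∀ ω, IsFiniteMeasure (μ ω)]
    {q : Ω → ℝ} (hq : ∀ ω, 0 ≤ q ω) {v u : Ω → X → ℝ} (hv : ∀ ω, Continuous (v ω))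
    (hu : ∀ ω, Continuous (u ω)) (hvu : ∀ ω x, v ω x ≤ u ω x) :
    ∑ ω, q ω * ∫ x, v ω x ∂μ ω ≤ ∑ ω, q ω * ∫ x, u ω x ∂μ ω :=
  Finset.sum_le_sum fun ω _ => mul_le_mul_of_nonneg_left
    (integral_mono ((hv ω).integrable_of_hasCompactSupport (.of_compactSpace _))
      ((hu ω).integrable_of_hasCompactSupport (.of_compactSpace _)) (hvu ω)) (hq ω)

end LinearFunctionals

section Duality

variable {Ω : Type} [Fintype Ω] [MeasurableSpace Ω] [MeasurableSingletonClass Ω] {n : ℕ}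

lemma exists_feasible_of_le_dualVal {p : Belief Ω} (hp : ∀ ω, 0 < p ω)
    (g : (Ω → C(Fin n → Belief Ω, ℝ)) →ₗ[ℝ] ℝ) (hg : ∀ w, g w ≤ dualVal p w) :
    ∃ μ : Ω → Measure (Fin n → Belief Ω), Feasible p n μ ∧
      ∀ w, g w = ∑ ω, p ω * ∫ x, w ω x ∂μ ω := by
  classical
  obtain ⟨ν, -, hν⟩ := exists_isFiniteMeasure_sum_integral_eq g fun w hw => by
    have := (hg (-w)).trans (dualVal_nonpos p (neg_nonpos.2 hw))
    rwa [map_neg, neg_nonpos] at this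
  have hmass (ω : Ω) : (ν ω).real univ = p ω := by
    have hle (c : Ω → ℝ) : ∑ ω, (ν ω).real univ * c ω ≤ ∑ ω, p ω * c ω := by
      simpa [hν] using (hg _).trans (dualVal_const_le p c)
    exact le_antisymm (by simpa [Pi.single_apply] using hle (Pi.single ω 1))
      (by simpa [Pi.single_apply] using hle (-Pi.single ω 1))
  have htransfer (i : Fin n) (β : Ω → C(Belief Ω, ℝ)) (hβ : IsBalanced fun ω => β ω) :
      ∑ ω, ∫ x, β ω (x i) ∂ν ω ≤ 0 := by
    simpa [hν] using (hg _).trans (hβ.dualVal_comp_eval_nonpos p i)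
  choose μ hprob hμ using fun ω => exists_isProbabilityMeasure_mul_integral_eq (hp ω) (hmass ω)
  refine ⟨μ, feasible_of_forall_balanced (fun ω => (hp ω).le) fun i β hβ => ?_, fun w => ?_⟩
  · have hneg := htransfer i (-β) fun b => by simp [hβ b]
    simp only [hμ]
    exact (htransfer i β hβ).antisymm (by simpa [integral_neg] using hneg)
  · simp only [hμ, hν]

theorem exists_feasible_sum_integral_eq_dualVal {p : Belief Ω} (hp : ∀ ω, 0 < p ω)
    (w : Ω → C(Fin n → Belief Ω, ℝ)) : ∃ μ : Ω → Measure (Fin n → Belief Ω),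
      Feasible p n μ ∧ ∑ ω, p ω * ∫ x, w ω x ∂μ ω = dualVal p w := by
  obtain ⟨g, hgw, hg⟩ := exists_linearMap_le_sublinear_apply_eq
    (fun c hc => dualVal_smul hp hc) (dualVal_add_le hp) w
  obtain ⟨μ, hμ, hgμ⟩ := exists_feasible_of_le_dualVal hp g hg
  exact ⟨μ, hμ, (hgμ w).symm.trans hgw⟩

variable {q : Ω → ℝ} {μ : Ω → Measure (Fin n → Belief Ω)}

theorem Feasible.sum_integral_add_sum_balanced (hμ : Feasible q n μ) (hq : ∀ ω, 0 ≤ q ω)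
    (V : Ω → ℝ) {β : Fin n → Ω → C(Belief Ω, ℝ)} (hβ : ∀ i, IsBalanced fun ω => β i ω) :
    ∑ ω, q ω * ∫ x, (V ω + ∑ i, β i ω (x i)) ∂μ ω = ∑ ω, q ω * V ω := by
  have := hμ.1
  have hint (i : Fin n) (ω : Ω) : Integrable (fun x => β i ω (x i)) (μ ω) :=
    Continuous.integrable_of_hasCompactSupport (by fun_prop) (.of_compactSpace _)
  have hintegral (ω : Ω) : ∫ x, (V ω + ∑ i, β i ω (x i)) ∂μ ω =
      V ω + ∑ i, ∫ x, β i ω (x i) ∂μ ω := by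
    rw [integral_add (integrable_const _) (integrable_finsetSum _ fun i _ => hint i ω),
      integral_finsetSum _ fun i _ => hint i ω, integral_const, probReal_univ, one_smul]
  have hzero : ∑ ω, ∑ i, q ω * ∫ x, β i ω (x i) ∂μ ω = 0 := by
    rw [Finset.sum_comm]
    exact Finset.sum_eq_zero fun i _ => hμ.sum_integral_balanced_eq_zero hq i (hβ i)
  simp only [hintegral, mul_add, Finset.sum_add_distrib, Finset.mul_sum, hzero, add_zero]

theorem val_eq_dualVal {p : Belief Ω} (hp : ∀ ω, 0 < p ω) (w : Ω → C(Fin n → Belief Ω, ℝ)) :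
    Val p n (fun ω => w ω) = dualVal p w := by
  obtain ⟨V, β, hβ, hle, hV⟩ := exists_isBalanced_eq_dualVal hp w
  obtain ⟨μ, hμ, hμw⟩ := exists_feasible_sum_integral_eq_dualVal hp w
  refine IsGreatest.csSup_eq ⟨⟨μ, hμ, hμw.symm⟩, ?_⟩
  rintro _ ⟨μ', hμ', rfl⟩
  rw [← hV, ← hμ'.sum_integral_add_sum_balanced (fun ω => (hp ω).le) V hβ]
  have := hμ'.1
  exact sum_mul_integral_mono (fun ω => (hp ω).le) (fun ω => (w ω).continuous)
    (fun ω => by fun_prop) hle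

end Duality

/-- the multi-receiver analog of the concavification formula
(equation `eq_analog_cavU`): the value equals the minimum of the non-revealing value
over dominating utilities for which revealing no information is optimal at any prior. -/
theorem value_eq_min_over_nonrevealing_optimal_dominating_utilities
    {Ω : Type} [Fintype Ω] [Nonempty Ω] [MeasurableSpace Ω] [MeasurableSingletonClass Ω]
    (p : Ω → ℝ) (hp : ∀ ω, 0 < p ω) (hpsum : ∑ ω : Ω, p ω = 1)
    (n : ℕ) (hn : 1 ≤ n)
    (v : Ω → (Fin n → Belief Ω) → ℝ)
    (hv : ∀ ω, Continuous (v ω)) :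
    IsLeast
      { r : ℝ | ∃ u : Ω → (Fin n → Belief Ω) → ℝ,
        (∀ ω, Continuous (u ω)) ∧
        (∀ (ω : Ω) (x : Fin n → Belief Ω), v ω x ≤ u ω x) ∧
        -- non-revealing is optimal under `u` for any (full-support) prior:
        (∀ (q : Ω → ℝ) (hq : ∀ ω, 0 < q ω) (hqs : ∑ ω : Ω, q ω = 1),
          ∀ μ : Ω → Measure (Fin n → Belief Ω), Feasible q n μ →
            ∑ ω : Ω, q ω * ∫ x, u ω x ∂(μ ω) ≤
              ∑ ω : Ω, q ω * u ω (fun _ : Fin n =>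
                (⟨q, ⟨fun ω' => (hq ω').le, hqs⟩⟩ : Belief Ω))) ∧
        r = ∑ ω : Ω, p ω * u ω (fun _ : Fin n =>
          (⟨p, ⟨fun ω' => (hp ω').le, hpsum⟩⟩ : Belief Ω)) }
      (Val p n v) := by
  let π : Belief Ω := ⟨p, fun ω => (hp ω).le, hpsum⟩
  let w (ω : Ω) : C(Fin n → Belief Ω, ℝ) := ⟨v ω, hv ω⟩
  have hval : Val p n v = dualVal π w := val_eq_dualVal (p := π) hp w
  rw [hval]
  constructor
  · obtain ⟨V, β, hβ, hle, hV⟩ := exists_isBalanced_eq_dualVal (p := π) hp w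
    refine ⟨fun ω x => V ω + ∑ i, β i ω (x i), fun ω => by fun_prop, hle,
      fun q hq hqs μ hμ => ?_, hV.symm.trans (sum_mul_add_sum_balanced_diag π V hβ).symm⟩
    let κ : Belief Ω := ⟨q, fun ω => (hq ω).le, hqs⟩
    exact (hμ.sum_integral_add_sum_balanced (fun ω => (hq ω).le) V hβ).trans_le
      (sum_mul_add_sum_balanced_diag κ V hβ).ge
  · rintro _ ⟨u, hu, hvu, hopt, rfl⟩
    obtain ⟨μ, hμ, hμw⟩ := exists_feasible_sum_integral_eq_dualVal (p := π) hp w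
    have := hμ.1
    calc dualVal π w = ∑ ω, p ω * ∫ x, v ω x ∂μ ω := hμw.symm
      _ ≤ ∑ ω, p ω * ∫ x, u ω x ∂μ ω := sum_mul_integral_mono (fun ω => (hp ω).le) hv hu hvu
      _ ≤ _ := hopt p hp hpsum μ hμ
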